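/- Let G be a free group of rank n greater than 1, with generators a_1,…,a_n. Then the set of triples (φ, u, v) ∈ G^n × G × G (where φ is identified with the endomorphism of G sending a_i to its i-th coordinate) such that there is no z ∈ G with u = φ(z)·v·z⁻¹ is generic: its asymptotic density in G^{n+2} equals 1. -/

import Mathlib

/-- The number of elements of the free group of rank `n` of word length at most `p`,
i.e. `|H_p|`. -/
noncomputable def ballCount (n p : ℕ) : ℕ :=
  Nat.card {w : FreeGroup (Fin n) // FreeGroup.norm w ≤ p}

/-!
A homomorphism with random images of length close to `p` satisfies a small cancellation condition:
up to a set of exponentially small density, the images are longer than `3p/4` and the images of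
distinct letters and inverse letters differ within their first `p/4` letters. Then
`|φ(z)| ≥ (p/4) |z|`, whereas for a fixed `ψ` the equation `u = φ(z) v ψ(z)⁻¹` forces
`|φ(z)| ≤ 2p + O(|z|)`. Hence `|z|` is bounded by a constant, and `u` is determined by `φ` and `v`
up to a bounded number of choices, which is negligible in a ball of exponential size.
-/

open Filter FreeGroup

open scoped Finset

variable {α β : Type*}

section Cancellation

theorem exists_isReduced_append_of_isReduced {l₁ l₂ : List (β × Bool)}
    (h₁ : IsReduced l₁) (h₂ : IsReduced l₂) :
    ∃ u c v, l₁ = u ++ invRev c ∧ l₂ = c ++ v ∧ IsReduced (u ++ v) := by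
  induction l₂ generalizing l₁ with
  | nil => exact ⟨l₁, [], [], by simp, rfl, by simpa using h₁⟩
  | cons b l₂ ih =>
    by_cases hlast : ∃ l, l₁ = l ++ [(b.1, !b.2)]
    · obtain ⟨l, rfl⟩ := hlast
      obtain ⟨u, c, v, rfl, rfl, huv⟩ :=
        ih (h₁.infix (List.prefix_append _ _).isInfix) (h₂.infix (List.suffix_cons _ _).isInfix)
      exact ⟨u, b :: c, v, by simp [invRev], rfl, huv⟩
    · refine ⟨l₁, [], b :: l₂, by simp, rfl, List.IsChain.append h₁ h₂ ?_⟩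
      rintro ⟨i, s⟩ ha b' hb rfl
      obtain rfl : b = b' := by simpa using hb
      by_contra hs
      obtain rfl : s = !b.2 := Bool.eq_not_of_ne hs
      exact hlast ⟨_, (List.dropLast_append_getLast? _ ha).symm⟩

variable [DecidableEq β]

theorem exists_toWord_mul_eq_append (g h : FreeGroup β) :
    ∃ u c v, g.toWord = u ++ invRev c ∧ h.toWord = c ++ v ∧ (g * h).toWord = u ++ v := by
  obtain ⟨u, c, v, hg, hh, huv⟩ :=
    exists_isReduced_append_of_isReduced (isReduced_toWord (x := g)) (isReduced_toWord (x := h))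
  have hmul : g * h = mk (u ++ v) := by
    rw [← mk_toWord (x := g), ← mk_toWord (x := h), hg, hh, ← mul_mk, ← mul_mk, ← mul_mk, ← inv_mk]
    group
  exact ⟨u, c, v, hg, hh, by rw [hmul, toWord_mk, huv.reduce_eq]⟩

theorem norm_mul_and_take_toWord_mul {L : ℕ} {g h : FreeGroup β}
    (hne : g⁻¹.toWord.take L ≠ h.toWord.take L) (hg : 2 * L ≤ g.norm) :
    g.norm + h.norm ≤ (g * h).norm + 2 * L ∧ (g * h).toWord.take L = g.toWord.take L := by
  obtain ⟨u, c, v, hgw, hhw, hmul⟩ := exists_toWord_mul_eq_append g h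
  have hc : c.length < L := by
    by_contra! hcL
    apply hne
    rw [toWord_inv, hgw, hhw, invRev_append, invRev_invRev, List.take_append_of_le_length hcL,
      List.take_append_of_le_length hcL]
  have hg_norm : g.norm = u.length + c.length := by simp [FreeGroup.norm, hgw]
  have hh_norm : h.norm = c.length + v.length := by simp [FreeGroup.norm, hhw]
  have hmul_norm : (g * h).norm = u.length + v.length := by simp [FreeGroup.norm, hmul]
  refine ⟨by lia, ?_⟩
  rw [hmul, hgw, List.take_append_of_le_length (by lia), List.take_append_of_le_length (by lia)]

end Cancellation

section LetterImage

/-- `g` or `g⁻¹` according to the sign `b`, in the convention of `FreeGroup`: `true` stands for the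
exponent `1` and `false` for `-1`. -/
def signed {G : Type*} [Group G] (b : Bool) (g : G) : G := cond b g g⁻¹

theorem signed_signed {G : Type*} [Group G] (b : Bool) (g : G) : signed b (signed b g) = g := by
  cases b <;> simp [signed]

theorem signed_not {G : Type*} [Group G] (b : Bool) (g : G) : signed (!b) g = (signed b g)⁻¹ := by
  cases b <;> simp [signed]

theorem norm_signed [DecidableEq β] (b : Bool) (g : FreeGroup β) : (signed b g).norm = g.norm := by
  cases b <;> simp [signed]

/-- The image of a letter or inverse letter under the homomorphism of free groups that is given by
`φ` on the generators. -/
def letterImage (φ : α → FreeGroup β) (x : α × Bool) : FreeGroup β := signed x.2 (φ x.1)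

theorem lift_mk_cons (φ : α → FreeGroup β) (x : α × Bool) (l : List (α × Bool)) :
    lift φ (mk (x :: l)) = letterImage φ x * lift φ (mk l) := by
  simp [letterImage, signed]

theorem letterImage_mk_not (φ : α → FreeGroup β) (i : α) (b : Bool) :
    letterImage φ (i, !b) = (letterImage φ (i, b))⁻¹ :=
  signed_not b (φ i)

theorem norm_letterImage [DecidableEq β] (φ : α → FreeGroup β) (x : α × Bool) :
    (letterImage φ x).norm = (φ x.1).norm :=
  norm_signed x.2 (φ x.1)

theorem exists_norm_map_le_mul [Finite α] [DecidableEq α] [DecidableEq β]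
    (ψ : FreeGroup α →* FreeGroup β) : ∃ M, ∀ z, (ψ z).norm ≤ M * z.norm := by
  obtain ⟨φ, rfl⟩ := lift.surjective ψ
  obtain ⟨M, hM⟩ := (Set.finite_range fun i => (φ i).norm).bddAbove
  have hlist (l : List (α × Bool)) : (lift φ (mk l)).norm ≤ M * l.length := by
    induction l with
    | nil => simp [← one_eq_mk]
    | cons x l ih =>
      calc (lift φ (mk (x :: l))).norm
          ≤ (letterImage φ x).norm + (lift φ (mk l)).norm := by
            rw [lift_mk_cons]; exact norm_mul_le _ _
        _ ≤ M + M * l.length :=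
            add_le_add ((norm_letterImage φ x).trans_le (hM ⟨x.1, rfl⟩)) ih
        _ = M * (x :: l).length := by rw [List.length_cons]; ring
  exact ⟨M, fun z => by simpa only [mk_toWord, FreeGroup.norm] using hlist z.toWord⟩

end LetterImage

section SmallCancellation

variable [DecidableEq β]

/-- The small cancellation condition that makes `lift φ` expand lengths by a factor `L`: the images
of the generators have length at least `3 * L`, and the images of distinct letters (inverse letters
included) are distinguished by their first `L` letters. -/
structure IsSmallCancellation (φ : α → FreeGroup β) (L : ℕ) : Prop where
  le_norm (i : α) : 3 * L ≤ (φ i).norm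
  injective_take : Function.Injective fun x => (letterImage φ x).toWord.take L

namespace IsSmallCancellation

variable {φ : α → FreeGroup β} {L : ℕ}

theorem mul_length_le_norm_and_take_toWord (hφ : IsSmallCancellation φ L) (x : α × Bool)
    (l : List (α × Bool)) (hl : IsReduced (x :: l)) :
    L * (x :: l).length ≤ (lift φ (FreeGroup.mk (x :: l))).norm ∧
      (lift φ (FreeGroup.mk (x :: l))).toWord.take L = (letterImage φ x).toWord.take L := by
  have hnorm (x : α × Bool) : 3 * L ≤ (letterImage φ x).norm :=
    (hφ.le_norm x.1).trans_eq (norm_letterImage φ x).symm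
  induction l generalizing x with
  | nil =>
    have hx := hnorm x
    simp only [lift_mk_cons, ← one_eq_mk, _root_.map_one, mul_one, List.length_singleton, and_true]
    lia
  | cons y l ih =>
    rw [isReduced_cons_cons] at hl
    obtain ⟨ih_norm, ih_take⟩ := ih y hl.2
    have hne : (letterImage φ x)⁻¹.toWord.take L ≠
        (lift φ (FreeGroup.mk (y :: l))).toWord.take L := by
      rw [ih_take, ← letterImage_mk_not]
      refine hφ.injective_take.ne ?_
      rintro rfl
      simpa using hl.1 rfl
    have hx := hnorm x
    obtain ⟨hmul, htake⟩ := norm_mul_and_take_toWord_mul hne (by lia)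
    rw [lift_mk_cons]
    refine ⟨?_, htake⟩
    rw [List.length_cons, mul_add_one]
    lia

theorem mul_norm_le_norm_lift [DecidableEq α] (hφ : IsSmallCancellation φ L) (z : FreeGroup α) :
    L * z.norm ≤ (lift φ z).norm := by
  rcases hz : z.toWord with _ | ⟨x, l⟩
  · simp [FreeGroup.norm, hz]
  · have hred : IsReduced (x :: l) := hz ▸ isReduced_toWord
    simpa only [← hz, mk_toWord, FreeGroup.norm] using
      (hφ.mul_length_le_norm_and_take_toWord x l hred).1

theorem norm_le_of_eq_mul_mul_inv [DecidableEq α] (hφ : IsSmallCancellation φ L)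
    {ψ : FreeGroup α →* FreeGroup β} {M p : ℕ} {u v : FreeGroup β} {z : FreeGroup α}
    (hψ : (ψ z).norm ≤ M * z.norm) (hM : 2 * M ≤ L) (hL : 0 < L) (hp : p ≤ 8 * L)
    (hu : u.norm ≤ p) (hv : v.norm ≤ p) (h : u = lift φ z * v * (ψ z)⁻¹) : z.norm ≤ 32 := by
  have hφz : lift φ z = u * ψ z * v⁻¹ := by rw [h]; group
  have hupper : L * z.norm ≤ u.norm + M * z.norm + v.norm :=
    calc L * z.norm ≤ (u * ψ z * v⁻¹).norm := hφz ▸ hφ.mul_norm_le_norm_lift z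
      _ ≤ (u * ψ z).norm + v⁻¹.norm := norm_mul_le _ _
      _ ≤ u.norm + (ψ z).norm + v.norm := by rw [norm_inv_eq]; gcongr; exact norm_mul_le _ _
      _ ≤ u.norm + M * z.norm + v.norm := by gcongr
  -- `L * |z| ≤ 16 * L + (L / 2) * |z|`
  refine Nat.le_of_mul_le_mul_left ?_ hL
  have := Nat.mul_le_mul_right z.norm hM
  lia

end IsSmallCancellation

end SmallCancellation

section WordBall

variable [DecidableEq β]

theorem finite_setOf_norm_le (β : Type*) [Finite β] [DecidableEq β] (p : ℕ) :
    {w : FreeGroup β | w.norm ≤ p}.Finite :=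
  Set.Finite.of_finite_image
    ((List.finite_length_le (β × Bool) p).subset (Set.image_subset_iff.2 fun _ hw => hw))
    toWord_injective.injOn

/-- The ball `H_p` of radius `p` about the identity in the word metric. -/
noncomputable def wordBall (β : Type*) [Finite β] [DecidableEq β] (p : ℕ) :
    Finset (FreeGroup β) :=
  (finite_setOf_norm_le β p).toFinset

theorem exists_sign_isReduced_append (w : FreeGroup β) :
    ∃ b, ∀ i, IsReduced (w.toWord ++ [(i, b)]) := by
  rcases List.eq_nil_or_concat w.toWord with hw | ⟨l, x, hw⟩
  · exact ⟨true, fun i => by simp [hw]⟩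
  · refine ⟨x.2, fun i => List.IsChain.append isReduced_toWord IsReduced.singleton ?_⟩
    simp [hw]

variable [Finite β]

theorem mem_wordBall {p : ℕ} {w : FreeGroup β} : w ∈ wordBall β p ↔ w.norm ≤ p := by
  simp [wordBall]

theorem card_wordBall_pos (β : Type*) [Finite β] [DecidableEq β] (p : ℕ) : 0 < #(wordBall β p) :=
  Finset.card_pos.2 ⟨1, by simp [mem_wordBall]⟩

theorem card_mul_card_wordBall_le (q : ℕ) :
    Nat.card β * #(wordBall β q) ≤ #(wordBall β (q + 1)) := by
  have := Fintype.ofFinite β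
  choose sign hsign using exists_sign_isReduced_append (β := β)
  let extend (x : β × FreeGroup β) : FreeGroup β := mk (x.2.toWord ++ [(x.1, sign x.2)])
  have toWord_extend (x) : (extend x).toWord = x.2.toWord ++ [(x.1, sign x.2)] := by
    rw [toWord_mk, (hsign x.2 x.1).reduce_eq]
  rw [Nat.card_eq_fintype_card, ← Finset.card_univ, ← Finset.card_product]
  refine Finset.card_le_card_of_injOn extend ?_ ?_
  · intro x hx
    simpa [mem_wordBall, FreeGroup.norm, toWord_extend] using hx
  · rintro ⟨i, w⟩ - ⟨j, w'⟩ - h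
    have hword := congrArg toWord h
    rw [toWord_extend, toWord_extend] at hword
    obtain ⟨hw, hij⟩ := List.append_inj' hword rfl
    exact Prod.ext (by simpa using congrArg (List.map Prod.fst) hij) (toWord_injective hw)

theorem two_pow_mul_card_wordBall_le [Nontrivial β] (q L : ℕ) :
    2 ^ L * #(wordBall β q) ≤ #(wordBall β (q + L)) := by
  induction L with
  | zero => simp
  | succ L ih =>
    calc 2 ^ (L + 1) * #(wordBall β q) = 2 * (2 ^ L * #(wordBall β q)) := by ring
      _ ≤ Nat.card β * #(wordBall β (q + L)) := Nat.mul_le_mul Finite.one_lt_card ih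
      _ ≤ #(wordBall β (q + (L + 1))) := card_mul_card_wordBall_le (q + L)

theorem two_pow_le_card_wordBall [Nontrivial β] {L p : ℕ} (hLp : L ≤ p) :
    2 ^ L ≤ #(wordBall β p) :=
  calc 2 ^ L ≤ 2 ^ L * #(wordBall β (p - L)) := Nat.le_mul_of_pos_right _ (card_wordBall_pos β _)
    _ ≤ #(wordBall β (p - L + L)) := two_pow_mul_card_wordBall_le _ _
    _ = #(wordBall β p) := by rw [Nat.sub_add_cancel hLp]

end WordBall

section Prefix

variable [DecidableEq β]

/-- The group element spelled by the first `L` letters of the reduced word of `g`. -/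
def takeWord (L : ℕ) (g : FreeGroup β) : FreeGroup β := mk (g.toWord.take L)

/-- The group element spelled by the reduced word of `g` without its first `L` letters. -/
def dropWord (L : ℕ) (g : FreeGroup β) : FreeGroup β := mk (g.toWord.drop L)

theorem takeWord_mul_dropWord (L : ℕ) (g : FreeGroup β) : takeWord L g * dropWord L g = g := by
  rw [takeWord, dropWord, mul_mk, List.take_append_drop, mk_toWord]

theorem toWord_dropWord (L : ℕ) (g : FreeGroup β) : (dropWord L g).toWord = g.toWord.drop L := by
  rw [dropWord, toWord_mk, (isReduced_toWord.infix (List.drop_suffix _ _).isInfix).reduce_eq]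

theorem norm_dropWord (L : ℕ) (g : FreeGroup β) : (dropWord L g).norm = g.norm - L := by
  simp [FreeGroup.norm, toWord_dropWord]

theorem takeWord_inv_dropWord {L : ℕ} {g : FreeGroup β} (hg : 2 * L ≤ g.norm) :
    takeWord L (dropWord L g)⁻¹ = takeWord L g⁻¹ := by
  have hsplit : g⁻¹.toWord = (dropWord L g)⁻¹.toWord ++ invRev (g.toWord.take L) := by
    rw [toWord_inv, toWord_inv, toWord_dropWord, ← invRev_append, List.take_append_drop]
  have hlen : L ≤ (dropWord L g)⁻¹.toWord.length := by
    change L ≤ (dropWord L g)⁻¹.norm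
    rw [norm_inv_eq, norm_dropWord]
    lia
  rw [takeWord, takeWord, hsplit, List.take_append_of_le_length hlen]

theorem takeWord_letterImage_update_dropWord [DecidableEq α] {L : ℕ} {φ : α → FreeGroup β}
    {x y : α × Bool} (hxy : x ≠ y) (hx : 2 * L ≤ (φ x.1).norm) :
    takeWord L (letterImage
        (Function.update φ x.1 (signed x.2 (dropWord L (letterImage φ x)))) y) =
      takeWord L (letterImage φ y) := by
  obtain ⟨i, b⟩ := x
  obtain ⟨j, c⟩ := y
  by_cases hij : j = i
  · subst hij
    obtain rfl : c = !b := Bool.eq_not_of_ne fun h => hxy (by rw [h])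
    rw [letterImage_mk_not, letterImage_mk_not, letterImage, Function.update_self, signed_signed,
      takeWord_inv_dropWord (hx.trans_eq (norm_letterImage φ _).symm)]
  · simp only [letterImage, Function.update_of_ne hij]

end Prefix

section Counting

theorem card_le_card_piFinset_update {ι X : Type*} [Fintype ι] [DecidableEq ι]
    {S : Finset (ι → X)} {s t : Finset X} (i : ι) (r : (ι → X) → X)
    (hs : ∀ φ ∈ S, ∀ j, φ j ∈ s)
    (ht : ∀ φ ∈ S, ∃ g ∈ t, φ i = r (Function.update φ i g)) :
    #S ≤ #(Fintype.piFinset (Function.update (fun _ => s) i t)) := by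
  refine Finset.card_le_card_of_surjOn (fun ψ => Function.update ψ i (r ψ)) fun φ hφ => ?_
  obtain ⟨g, hg, hr⟩ := ht φ hφ
  refine ⟨Function.update φ i g, ?_, ?_⟩
  · refine Fintype.mem_piFinset.2 fun j => ?_
    obtain rfl | hj := eq_or_ne j i
    · simpa using hg
    · simpa [hj] using hs φ hφ j
  · simp [← hr]

variable [Fintype α] [DecidableEq α] [Finite β] [DecidableEq β] [Nontrivial β]

theorem two_pow_mul_card_le_card_wordBall_pow {L p : ℕ} (hLp : L ≤ p)
    {S : Finset (α → FreeGroup β)} (i : α)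
    (r : (α → FreeGroup β) → FreeGroup β) (hS : ∀ φ ∈ S, ∀ j, (φ j).norm ≤ p)
    (hr : ∀ φ ∈ S, ∃ g : FreeGroup β, g.norm ≤ p - L ∧ φ i = r (Function.update φ i g)) :
    2 ^ L * #S ≤ #(wordBall β p) ^ Fintype.card α := by
  have hcard := card_le_card_piFinset_update (s := wordBall β p) (t := wordBall β (p - L)) i r
    (by simpa only [mem_wordBall] using hS) (by simpa only [mem_wordBall] using hr)
  have hball : 2 ^ L * #(wordBall β (p - L)) ≤ #(wordBall β p) := by
    simpa only [Nat.sub_add_cancel hLp] using two_pow_mul_card_wordBall_le (β := β) (p - L) L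
  calc 2 ^ L * #S
      ≤ 2 ^ L * ∏ j, Function.update (fun _ => #(wordBall β p)) i #(wordBall β (p - L)) j := by
        gcongr
        refine hcard.trans_eq ?_
        rw [Fintype.card_piFinset]
        exact Finset.prod_congr rfl fun j _ =>
          Function.apply_update (fun _ => Finset.card) _ _ _ _
    _ = 2 ^ L * #(wordBall β (p - L)) * ∏ _j ∈ Finset.univ \ {i}, #(wordBall β p) := by
        rw [Finset.prod_update_of_mem (Finset.mem_univ i), mul_assoc]
    _ ≤ #(wordBall β p) * ∏ _j ∈ Finset.univ \ {i}, #(wordBall β p) := by gcongr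
    _ = #(wordBall β p) ^ Fintype.card α := by
        rw [← Finset.prod_eq_mul_prod_sdiff_singleton_of_mem (Finset.mem_univ i)
          fun _ => #(wordBall β p), Finset.prod_const, Finset.card_univ]

theorem two_pow_mul_card_short_le {L p : ℕ} (hLp : L ≤ p) (i : α) :
    2 ^ L * #{φ ∈ Fintype.piFinset fun _ : α => wordBall β p | (φ i).norm ≤ p - L} ≤
      #(wordBall β p) ^ Fintype.card α := by
  refine two_pow_mul_card_le_card_wordBall_pow hLp i (fun ψ => ψ i) ?_ ?_
  · simp +contextual [mem_wordBall]
  · intro φ hφ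
    exact ⟨φ i, (Finset.mem_filter.1 hφ).2, by simp⟩

theorem two_pow_mul_card_collision_le {L p : ℕ} (hLp : L ≤ p) {x y : α × Bool}
    (hxy : x ≠ y) :
    2 ^ L * #{φ ∈ Fintype.piFinset fun _ : α => wordBall β p | 2 * L ≤ (φ x.1).norm ∧
        (letterImage φ x).toWord.take L = (letterImage φ y).toWord.take L} ≤
      #(wordBall β p) ^ Fintype.card α := by
  refine two_pow_mul_card_le_card_wordBall_pow hLp x.1
    (fun ψ => signed x.2 (takeWord L (letterImage ψ y) * letterImage ψ x)) ?_ ?_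
  · simp +contextual [mem_wordBall]
  · -- Delete the common prefix from the image of `x`. It can still be read off the image of `y`,
    -- even if `y` is the inverse of `x`, because the image of `x` has length at least `2 * L`.
    intro φ hφ
    simp only [Finset.mem_filter, Fintype.mem_piFinset, mem_wordBall] at hφ
    obtain ⟨hp, hlong, htake⟩ := hφ
    refine ⟨signed x.2 (dropWord L (letterImage φ x)), ?_, ?_⟩
    · rw [norm_signed, norm_dropWord, norm_letterImage]
      exact Nat.sub_le_sub_right (hp x.1) L
    · have hprefix : takeWord L (letterImage φ y) = takeWord L (letterImage φ x) := by
        rw [takeWord, takeWord, htake]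
      rw [takeWord_letterImage_update_dropWord hxy hlong, hprefix, letterImage, letterImage,
        Function.update_self, signed_signed, takeWord_mul_dropWord, signed_signed]

theorem mul_card_biUnion_le {ι X : Type*} [DecidableEq X] {s : Finset ι} {f : ι → Finset X}
    {c N : ℕ} (h : ∀ i ∈ s, c * #(f i) ≤ N) : c * #(s.biUnion f) ≤ #s * N :=
  calc c * #(s.biUnion f) ≤ c * ∑ i ∈ s, #(f i) := by gcongr; exact Finset.card_biUnion_le
    _ = ∑ i ∈ s, c * #(f i) := Finset.mul_sum _ _ _
    _ ≤ #s * N := Finset.sum_le_card_nsmul s _ N h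

open Classical in
theorem two_pow_mul_card_not_isSmallCancellation_le {L p : ℕ} (hLp : 4 * L ≤ p) :
    2 ^ L * #{φ ∈ Fintype.piFinset fun _ : α => wordBall β p | ¬ IsSmallCancellation φ L} ≤
      (Fintype.card α + #(Finset.univ : Finset (α × Bool)).offDiag) *
        #(wordBall β p) ^ Fintype.card α := by
  have hL : L ≤ p := by lia
  let Φ := Fintype.piFinset fun _ : α => wordBall β p
  let short (i : α) := {φ ∈ Φ | (φ i).norm ≤ p - L}
  let collision (xy : (α × Bool) × (α × Bool)) := {φ ∈ Φ | 2 * L ≤ (φ xy.1.1).norm ∧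
    (letterImage φ xy.1).toWord.take L = (letterImage φ xy.2).toWord.take L}
  have hcover : {φ ∈ Φ | ¬ IsSmallCancellation φ L} ⊆
      Finset.univ.biUnion short ∪ Finset.univ.offDiag.biUnion collision := by
    intro φ hφ
    obtain ⟨hΦ, hnot⟩ := Finset.mem_filter.1 hφ
    by_contra hmem
    simp only [Finset.mem_union, Finset.mem_biUnion, Finset.mem_univ, Finset.mem_offDiag,
      Finset.mem_filter, short, collision, hΦ, true_and, not_or, not_exists, not_and] at hmem
    obtain ⟨hlong, hdistinct⟩ := hmem
    refine hnot ⟨fun i => by have := hlong i; lia, fun x y htake => ?_⟩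
    by_contra hxy
    exact hdistinct (x, y) hxy (by have := hlong x.1; lia) htake
  calc 2 ^ L * #{φ ∈ Φ | ¬ IsSmallCancellation φ L}
      ≤ 2 ^ L * (#(Finset.univ.biUnion short) + #(Finset.univ.offDiag.biUnion collision)) := by
        gcongr
        exact (Finset.card_le_card hcover).trans (Finset.card_union_le _ _)
    _ ≤ _ := by
        rw [mul_add, add_mul, ← Finset.card_univ]
        refine add_le_add (mul_card_biUnion_le fun i _ => two_pow_mul_card_short_le hL i)
          (mul_card_biUnion_le fun xy hxy => two_pow_mul_card_collision_le hL ?_)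
        exact (Finset.mem_offDiag.1 hxy).2.2

end Counting

section TwistedConjugacy

/-- The triples `(φ, u, v)` whose entries all have length at most `p`. -/
noncomputable def tripleBall (α β : Type*) [Fintype α] [DecidableEq α] [Finite β] [DecidableEq β]
    (p : ℕ) : Finset ((α → FreeGroup β) × FreeGroup β × FreeGroup β) :=
  (Fintype.piFinset fun _ => wordBall β p) ×ˢ wordBall β p ×ˢ wordBall β p

variable [Fintype α] [DecidableEq α] [Finite β] [DecidableEq β]

theorem mem_tripleBall {p : ℕ} {x : (α → FreeGroup β) × FreeGroup β × FreeGroup β} :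
    x ∈ tripleBall α β p ↔ (∀ i, (x.1 i).norm ≤ p) ∧ x.2.1.norm ≤ p ∧ x.2.2.norm ≤ p := by
  simp [tripleBall, mem_wordBall]

theorem card_tripleBall (α β : Type*) [Fintype α] [DecidableEq α] [Finite β] [DecidableEq β]
    (p : ℕ) : #(tripleBall α β p) = #(wordBall β p) ^ (Fintype.card α + 2) := by
  rw [tripleBall, Finset.card_product, Finset.card_product, Fintype.card_piFinset,
    Finset.prod_const, Finset.card_univ]
  ring

open Classical in
theorem card_isSmallCancellation_twisted_le {ψ : FreeGroup α →* FreeGroup β} {M L p : ℕ}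
    (hψ : ∀ z, (ψ z).norm ≤ M * z.norm) (hM : 2 * M ≤ L) (hL : 0 < L) (hp : p ≤ 8 * L) :
    #{x ∈ tripleBall α β p | IsSmallCancellation x.1 L ∧
        ∃ z, x.2.1 = lift x.1 z * x.2.2 * (ψ z)⁻¹} ≤
      #(wordBall β p) ^ (Fintype.card α + 1) * #(wordBall α 32) := by
  let Λ := (Fintype.piFinset fun _ : α => wordBall β p) ×ˢ wordBall β p ×ˢ wordBall α 32
  have hΛ : #Λ = #(wordBall β p) ^ (Fintype.card α + 1) * #(wordBall α 32) := by
    rw [Finset.card_product, Finset.card_product, Fintype.card_piFinset, Finset.prod_const,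
      Finset.card_univ]
    ring
  rw [← hΛ]
  refine Finset.card_le_card_of_surjOn
    (fun t => (t.1, lift t.1 t.2.2 * t.2.1 * (ψ t.2.2)⁻¹, t.2.1)) ?_
  rintro ⟨φ, u, v⟩ hx
  simp only [Finset.coe_filter, Set.mem_ofPred_eq, mem_tripleBall] at hx
  obtain ⟨⟨hφ, hu, hv⟩, hsmall, z, hz⟩ := hx
  have hz_norm : z.norm ≤ 32 := hsmall.norm_le_of_eq_mul_mul_inv (hψ z) hM hL hp hu hv hz
  exact ⟨(φ, v, z), by simp [Λ, mem_wordBall, hφ, hv, hz_norm], by simp [← hz]⟩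

open Classical in
theorem two_pow_mul_card_twisted_le [Nontrivial β] {ψ : FreeGroup α →* FreeGroup β} {M L p : ℕ}
    (hψ : ∀ z, (ψ z).norm ≤ M * z.norm) (hM : 2 * M ≤ L) (hL : 0 < L) (hLp : 4 * L ≤ p)
    (hp : p ≤ 8 * L) :
    2 ^ L * #{x ∈ tripleBall α β p | ∃ z, x.2.1 = lift x.1 z * x.2.2 * (ψ z)⁻¹} ≤
      (Fintype.card α + #(Finset.univ : Finset (α × Bool)).offDiag + #(wordBall α 32)) *
        #(tripleBall α β p) := by
  let B := #(wordBall β p)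
  let bad := {φ ∈ Fintype.piFinset fun _ : α => wordBall β p | ¬ IsSmallCancellation φ L}
  let twisted := {x ∈ tripleBall α β p | IsSmallCancellation x.1 L ∧
    ∃ z, x.2.1 = lift x.1 z * x.2.2 * (ψ z)⁻¹}
  have hcover : {x ∈ tripleBall α β p | ∃ z, x.2.1 = lift x.1 z * x.2.2 * (ψ z)⁻¹} ⊆
      bad ×ˢ wordBall β p ×ˢ wordBall β p ∪ twisted := by
    intro x hx
    obtain ⟨hmem, hz⟩ := Finset.mem_filter.1 hx
    by_cases hsmall : IsSmallCancellation x.1 L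
    · exact Finset.mem_union_right _ (Finset.mem_filter.2 ⟨hmem, hsmall, hz⟩)
    · obtain ⟨hφ, huv⟩ := Finset.mem_product.1 hmem
      exact Finset.mem_union_left _
        (Finset.mem_product.2 ⟨Finset.mem_filter.2 ⟨hφ, hsmall⟩, huv⟩)
  have hbad : 2 ^ L * #bad ≤
      (Fintype.card α + #(Finset.univ : Finset (α × Bool)).offDiag) * B ^ Fintype.card α :=
    two_pow_mul_card_not_isSmallCancellation_le hLp
  have htwisted : #twisted ≤ B ^ (Fintype.card α + 1) * #(wordBall α 32) :=
    card_isSmallCancellation_twisted_le hψ hM hL hp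
  have hpow : 2 ^ L ≤ B := two_pow_le_card_wordBall (by lia)
  calc 2 ^ L * #{x ∈ tripleBall α β p | ∃ z, x.2.1 = lift x.1 z * x.2.2 * (ψ z)⁻¹}
      ≤ 2 ^ L * (#bad * (B * B) + #twisted) := by
        gcongr
        refine (Finset.card_le_card hcover).trans ((Finset.card_union_le _ _).trans_eq ?_)
        rw [Finset.card_product, Finset.card_product]
    _ = 2 ^ L * #bad * (B * B) + 2 ^ L * #twisted := by ring
    _ ≤ (Fintype.card α + #(Finset.univ : Finset (α × Bool)).offDiag) * B ^ Fintype.card α *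
          (B * B) + B * (B ^ (Fintype.card α + 1) * #(wordBall α 32)) := by gcongr
    _ = _ := by rw [card_tripleBall]; ring

end TwistedConjugacy

theorem tendsto_card_filter_not_div_card {ι X : Type*} {l : Filter ι} {Ω : ι → Finset X}
    {P : X → Prop} [DecidablePred P] {K : ℕ} {e : ι → ℕ} (hΩ : ∀ p, (Ω p).Nonempty)
    (he : Tendsto e l atTop) (hP : ∀ᶠ p in l, 2 ^ e p * #{x ∈ Ω p | P x} ≤ K * #(Ω p)) :
    Tendsto (fun p => (#{x ∈ Ω p | ¬ P x} : ℝ) / #(Ω p)) l (nhds 1) := by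
  have hpos (p : ι) : (0 : ℝ) < #(Ω p) := Nat.cast_pos.2 (hΩ p).card_pos
  have hlim : Tendsto (fun p => (K : ℝ) * (1 / 2) ^ e p) l (nhds 0) := by
    simpa using ((tendsto_pow_atTop_nhds_zero_of_lt_one (r := (1 / 2 : ℝ))
      (by norm_num) (by norm_num)).comp he).const_mul (K : ℝ)
  have hbad : Tendsto (fun p => (#{x ∈ Ω p | P x} : ℝ) / #(Ω p)) l (nhds 0) := by
    refine squeeze_zero' (Eventually.of_forall fun p => by positivity) ?_ hlim
    filter_upwards [hP] with p hp
    have hp' : (2 : ℝ) ^ e p * #{x ∈ Ω p | P x} ≤ K * #(Ω p) := mod_cast hp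
    rw [div_le_iff₀ (hpos p), one_div_pow, mul_one_div, div_mul_eq_mul_div,
      le_div_iff₀ (by positivity)]
    linarith
  have hcompl (p : ι) : (#{x ∈ Ω p | ¬ P x} : ℝ) / #(Ω p) = 1 - #{x ∈ Ω p | P x} / #(Ω p) := by
    have hsum : (#{x ∈ Ω p | P x} : ℝ) + #{x ∈ Ω p | ¬ P x} = #(Ω p) :=
      mod_cast Finset.card_filter_add_card_filter_not P
    rw [eq_sub_iff_add_eq, ← add_div, add_comm, hsum, div_self (hpos p).ne']
  simpa only [hcompl, sub_zero] using hbad.const_sub 1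

theorem generic_not_singly_twisted_conjugate_general [Fintype α] [Finite β] [DecidableEq β]
    [Nontrivial β] (ψ : FreeGroup α →* FreeGroup β) :
    Tendsto (fun p : ℕ =>
      (Nat.card {x : (α → FreeGroup β) × FreeGroup β × FreeGroup β //
          (¬ ∃ z : FreeGroup α, x.2.1 = lift x.1 z * x.2.2 * (ψ z)⁻¹) ∧
          (∀ i, (x.1 i).norm ≤ p) ∧ x.2.1.norm ≤ p ∧ x.2.2.norm ≤ p} : ℝ) /
        (Nat.card {w : FreeGroup β // w.norm ≤ p} : ℝ) ^ (Fintype.card α + 2))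
      atTop (nhds 1) := by
  classical
  obtain ⟨M, hM⟩ := exists_norm_map_le_mul ψ
  have hquarter : Tendsto (fun p : ℕ => p / 4) atTop atTop :=
    Nat.tendsto_div_const_atTop (by norm_num)
  have hnonempty (p : ℕ) : (tripleBall α β p).Nonempty := by
    rw [← Finset.card_pos, card_tripleBall]
    exact pow_pos (card_wordBall_pos β p) _
  have hbound := (eventually_ge_atTop (8 * M + 4)).mono fun p hp =>
    two_pow_mul_card_twisted_le (L := p / 4) (p := p) hM (by lia) (by lia) (by lia) (by lia)
  let P (x : (α → FreeGroup β) × FreeGroup β × FreeGroup β) : Prop :=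
    ∃ z : FreeGroup α, x.2.1 = lift x.1 z * x.2.2 * (ψ z)⁻¹
  refine (tendsto_card_filter_not_div_card (P := P) hnonempty hquarter hbound).congr fun p => ?_
  rw [card_tripleBall, Nat.cast_pow, Nat.subtype_card (wordBall β p) fun _ => mem_wordBall,
    Nat.subtype_card {x ∈ tripleBall α β p | ¬ P x} fun x => by
      rw [Finset.mem_filter, mem_tripleBall, and_comm]]

/-- Let `G` be the free group of rank `n > 1`. The set of triples
`(φ, u, v) ∈ G^n × G × G` (with `φ` identified with the endomorphism sending the `i`-th
generator to its `i`-th coordinate) such that there is no `z ∈ G` with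
`u = φ(z) * v * z⁻¹` is generic: its asymptotic density in `G^{n+2}` is `1`. -/
theorem generic_not_singly_twisted_conjugate {n : ℕ} (hn : 1 < n) :
    Filter.Tendsto (fun p : ℕ =>
      (Nat.card {x : (Fin n → FreeGroup (Fin n)) × FreeGroup (Fin n) × FreeGroup (Fin n) //
          (¬ ∃ z : FreeGroup (Fin n), x.2.1 = FreeGroup.lift x.1 z * x.2.2 * z⁻¹) ∧
          (∀ i, FreeGroup.norm (x.1 i) ≤ p) ∧
          FreeGroup.norm x.2.1 ≤ p ∧ FreeGroup.norm x.2.2 ≤ p} : ℝ) /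
        (ballCount n p : ℝ) ^ (n + 2))
      Filter.atTop (nhds 1) := by
  have : Nontrivial (Fin n) := Fin.nontrivial_iff_two_le.2 hn
  simpa only [MonoidHom.id_apply, Fintype.card_fin, ballCount] using
    generic_not_singly_twisted_conjugate_general (MonoidHom.id (FreeGroup (Fin n)))
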